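/- arXiv:1011.1663 — 2 statements merged into one kernel-verified Lean document; each statement's English description precedes it below -/
import Mathlib

section
/- Let (R, m) be a 2-dimensional commutative Noetherian local domain with infinitely many prime ideals. Then the class (FG, FS) satisfies condition C_I for every ideal I of R, but (FG, FS) is not closed under injective hulls: there exists an R-module X in (FG, FS) whose injective hull E_R(X) is not in (FG, FS). -/
universe u

/-- The class `(FG, FS)`: an `R`-module `X` belongs to `(FG, FS)` if it has a finitely
generated submodule `F` such that `X ⧸ F` has finite support. -/
def InFGFS (R : Type u) [CommRing R] (X : Type u) [AddCommGroup X] [Module R X] : Prop :=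
  ∃ F : Submodule R X, F.FG ∧ (Module.support R (X ⧸ F)).Finite

/-- `f : X →ₗ[R] E` realizes `E` as an injective hull of `X`: `E` is injective, `f` is
injective, and the image of `f` is an essential submodule of `E`. -/
def IsInjectiveHull (R : Type u) [CommRing R] {X E : Type u} [AddCommGroup X] [Module R X]
    [AddCommGroup E] [Module R E] (f : X →ₗ[R] E) : Prop :=
  Module.Injective R E ∧ Function.Injective f ∧
    ∀ N : Submodule R E, N ≠ ⊥ → N ⊓ LinearMap.range f ≠ ⊥

/-! If `I ≠ 0`, then `R ⧸ I` has dimension at most `1`, so its primes are maximal or minimal and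
there are only finitely many of them; hence every `I`-torsion module has finite support. For
`I = 0` the condition `C_I` is a tautology.

Injective modules over a domain are divisible. If `E` is divisible and `F` is a finitely generated
submodule, then at a nonzero prime outside `Supp (E ⧸ F)` the localization of `E` is finitely
generated and divisible, hence zero by Nakayama. So an injective module in `(FG, FS)` has finite
support, while the support of the injective hull of `R` is the infinite set of all primes. -/

open PrimeSpectrum

open scoped nonZeroDivisors

section ZeroLocus

variable {R : Type*} [CommRing R]

theorem finite_primeSpectrum_of_krullDimLE_one [IsNoetherianRing R] [Finite (MaximalSpectrum R)]
    [Ring.KrullDimLE 1 R] : Finite (PrimeSpectrum R) := by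
  have hmin : (asIdeal ⁻¹' minimalPrimes R : Set (PrimeSpectrum R)).Finite :=
    (minimalPrimes.finite_of_isNoetherianRing R).preimage fun _ _ _ _ => PrimeSpectrum.ext
  have hmax : (Set.range (MaximalSpectrum.toPrimeSpectrum (R := R))).Finite :=
    Set.finite_range _
  refine Set.finite_univ_iff.mp ((hmin.union hmax).subset fun p _ => ?_)
  exact (Ring.krullDimLE_one_iff.mp ‹_› p.asIdeal p.isPrime).imp id fun hp => ⟨⟨_, hp⟩, rfl⟩

instance finite_maximalSpectrum_quotient [Finite (MaximalSpectrum R)] (I : Ideal R) :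
    Finite (MaximalSpectrum (R ⧸ I)) := by
  have hmk := Ideal.Quotient.mk_surjective (I := I)
  refine Finite.of_injective (β := MaximalSpectrum R)
    (fun M => ⟨M.asIdeal.comap (Ideal.Quotient.mk I),
      have := M.isMaximal; Ideal.comap_isMaximal_of_surjective _ hmk⟩) fun M N hMN => ?_
  exact MaximalSpectrum.ext
    (Ideal.comap_injective_of_surjective _ hmk (congrArg MaximalSpectrum.asIdeal hMN))

theorem krullDimLE_quotient_of_ne_bot [IsDomain R] {n : ℕ} (hdim : ringKrullDim R ≤ n + 1)
    {I : Ideal R} (hI : I ≠ ⊥) : Ring.KrullDimLE n (R ⧸ I) := by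
  obtain ⟨r, hrI, hr⟩ := Submodule.exists_mem_ne_zero_of_ne_bot hI
  have hlt : ringKrullDim (R ⧸ I) + 1 ≤ n + 1 :=
    (ringKrullDim_succ_le_of_surjective _ Ideal.Quotient.mk_surjective
      (mem_nonZeroDivisors_of_ne_zero hr) (Ideal.Quotient.eq_zero_iff_mem.mpr hrI)).trans hdim
  rw [Ring.KrullDimLE, Order.krullDimLE_iff]
  exact ENat.WithBot.add_le_add_natCast_right_iff.mp hlt

theorem finite_zeroLocus_of_ringKrullDim_le_two [IsNoetherianRing R] [IsDomain R]
    [Finite (MaximalSpectrum R)] (hdim : ringKrullDim R ≤ 2) {I : Ideal R} (hI : I ≠ ⊥) :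
    (zeroLocus (I : Set R)).Finite := by
  have : Ring.KrullDimLE 1 (R ⧸ I) := krullDimLE_quotient_of_ne_bot hdim hI
  have : Finite (PrimeSpectrum (R ⧸ I)) := finite_primeSpectrum_of_krullDimLE_one
  rw [← Ideal.mk_ker (I := I), ← range_comap_of_surjective _ _ Ideal.Quotient.mk_surjective]
  exact Set.finite_range _

end ZeroLocus

section Support

variable {R M : Type*} [CommRing R] [AddCommGroup M] [Module R M]

theorem support_subset_zeroLocus_of_forall_pow_smul_eq_zero {I : Ideal R}
    (hM : ∀ x : M, ∃ n : ℕ, ∀ a ∈ I ^ n, a • x = 0) :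
    Module.support R M ⊆ zeroLocus (I : Set R) := by
  intro p hp a ha
  obtain ⟨x, hx⟩ := Module.mem_support_iff'.mp hp
  obtain ⟨n, hn⟩ := hM x
  by_contra hap
  exact hx (a ^ n) (mt (p.isPrime.mem_of_pow_mem n) hap) (hn _ (Ideal.pow_mem_pow ha n))

theorem subsingleton_of_surjective_smul_of_mem_maximalIdeal [IsLocalRing R] [Module.Finite R M]
    {r : R} (hr : r ∈ IsLocalRing.maximalIdeal R) (hsurj : Function.Surjective (r • · : M → M)) :
    Subsingleton M := by
  by_contra hM
  rw [not_subsingleton_iff_nontrivial] at hM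
  refine Submodule.top_ne_pointwise_smul_of_mem_jacobson_annihilator (M := M)
    (IsLocalRing.maximalIdeal_le_jacobson _ hr) (Eq.symm (eq_top_iff.mpr fun x _ => ?_))
  obtain ⟨y, rfl⟩ := hsurj x
  exact Submodule.smul_mem_pointwise_smul y r ⊤ trivial

theorem surjective_smul_localizedModule (S : Submonoid R) {r : R}
    (hsurj : Function.Surjective (r • · : M → M)) :
    Function.Surjective (algebraMap R (Localization S) r • · :
      LocalizedModule S M → LocalizedModule S M) := by
  intro x
  induction x using LocalizedModule.induction_on with
  | h m s =>
    obtain ⟨m, rfl⟩ := hsurj m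
    exact ⟨LocalizedModule.mk m s, by simp [algebraMap_smul, LocalizedModule.smul'_mk]⟩

theorem finite_localizedModule_of_notMem_support_quotient {F : Submodule R M} (hF : F.FG)
    {p : PrimeSpectrum R} (hp : p ∉ Module.support R (M ⧸ F)) :
    Module.Finite (Localization.AtPrime p.asIdeal)
      (LocalizedModule p.asIdeal.primeCompl M) := by
  have : Module.Finite R F := .of_fg hF
  have hsurj : Function.Surjective (LocalizedModule.map p.asIdeal.primeCompl F.subtype) := by
    rw [LinearMap.localizedMap_surjective_iff_subsingleton_localized_coker, F.range_subtype]
    exact Module.notMem_support_iff.mp hp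
  exact .of_surjective _ hsurj

theorem support_inter_zeroLocus_subset_support_quotient {F : Submodule R M} (hF : F.FG) {r : R}
    (hsurj : Function.Surjective (r • · : M → M)) :
    Module.support R M ∩ zeroLocus {r} ⊆ Module.support R (M ⧸ F) := by
  rintro p ⟨hpM, hrp⟩
  by_contra hp
  have := finite_localizedModule_of_notMem_support_quotient hF hp
  refine Module.notMem_support_iff.mpr ?_ hpM
  refine subsingleton_of_surjective_smul_of_mem_maximalIdeal
    (R := Localization.AtPrime p.asIdeal) ?_ (surjective_smul_localizedModule _ hsurj)
  exact (IsLocalization.AtPrime.to_map_mem_maximal_iff _ p.asIdeal r).mpr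
    (Set.singleton_subset_iff.mp hrp)

end Support

section InFGFS

variable {R X Y : Type u} [CommRing R] [AddCommGroup X] [Module R X] [AddCommGroup Y] [Module R Y]

theorem surjective_smul_of_injective_of_mem_nonZeroDivisors [Module.Injective R X] {r : R}
    (hr : r ∈ R⁰) : Function.Surjective (r • · : X → X) := by
  intro x
  obtain ⟨g, hg⟩ := Module.Injective.out (LinearMap.mulLeft R r)
    (fun _ _ => (mul_cancel_left_mem_nonZeroDivisors hr).mp) (LinearMap.toSpanSingleton R X x)
  refine ⟨g 1, ?_⟩
  simpa [← map_smul] using hg 1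

theorem InFGFS.of_finite [Module.Finite R X] : InFGFS R X :=
  ⟨⊤, Module.Finite.fg_top, by simp [Module.support_eq_empty]⟩

theorem InFGFS.of_finite_support (hX : (Module.support R X).Finite) : InFGFS R X :=
  ⟨⊥, Submodule.fg_bot, by rwa [(Submodule.quotEquivOfEqBot (⊥ : Submodule R X) rfl).support_eq]⟩

theorem InFGFS.of_linearEquiv (e : X ≃ₗ[R] Y) : InFGFS R X → InFGFS R Y := by
  rintro ⟨F, hF, hfin⟩
  refine ⟨F.map (e : X →ₗ[R] Y), hF.map _, ?_⟩
  rwa [← (Submodule.Quotient.equiv F _ e rfl).support_eq]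

theorem InFGFS.of_torsionBySet {I : Ideal R} (hI : I ≠ ⊥ → (zeroLocus (I : Set R)).Finite)
    (htors : ∀ x : X, ∃ n : ℕ, ∀ a ∈ I ^ n, a • x = 0)
    (hX : InFGFS R (Submodule.torsionBySet R X (I : Set R))) : InFGFS R X := by
  rcases eq_or_ne I ⊥ with rfl | hne
  · have htop : Submodule.torsionBySet R X ((⊥ : Ideal R) : Set R) = ⊤ :=
      (Module.isTorsionBySet_iff_torsionBySet_eq_top _).mp
        fun _ ⟨a, ha⟩ => by simp [(Submodule.mem_bot R).mp ha]
    exact hX.of_linearEquiv (LinearEquiv.ofTop _ htop)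
  · exact .of_finite_support
      ((hI hne).subset (support_subset_zeroLocus_of_forall_pow_smul_eq_zero htors))

theorem InFGFS.finite_support_of_injective [IsDomain R] [Module.Injective R X]
    (hX : InFGFS R X) : (Module.support R X).Finite := by
  obtain ⟨F, hF, hfin⟩ := hX
  refine (hfin.insert ⊥).subset fun p hp => or_iff_not_imp_left.mpr fun hne => ?_
  obtain ⟨r, hrp, hr⟩ :=
    Submodule.exists_mem_ne_zero_of_ne_bot fun h => hne (PrimeSpectrum.ext h)
  exact support_inter_zeroLocus_subset_support_quotient hF
    (surjective_smul_of_injective_of_mem_nonZeroDivisors (mem_nonZeroDivisors_of_ne_zero hr))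
    ⟨hp, Set.singleton_subset_iff.mpr hrp⟩

end InFGFS

-- This also covers `1`-dimensional Noetherian domains such as `ℤ`.
theorem fgfs_melkersson_not_closed_under_injective_hulls_general
    (R : Type u) [CommRing R] [IsDomain R]
    (hV : ∀ I : Ideal R, I ≠ ⊥ → (zeroLocus (I : Set R)).Finite)
    (h : Infinite (PrimeSpectrum R)) :
    (∀ (I : Ideal R) (X : Type u) [AddCommGroup X] [Module R X],
      (∀ x : X, ∃ n : ℕ, ∀ a ∈ I ^ n, a • x = 0) →
      InFGFS R ↥(Submodule.torsionBySet R X (I : Set R)) →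
      InFGFS R X) ∧
    ∃ X : ModuleCat.{u} R, InFGFS R X ∧
      ∀ (E : Type u) [AddCommGroup E] [Module R E] (f : X →ₗ[R] E),
        IsInjectiveHull R f → ¬ InFGFS R E := by
  refine ⟨fun I X _ _ htors hX => hX.of_torsionBySet (hV I) htors,
    ModuleCat.of R R, InFGFS.of_finite, ?_⟩
  rintro E _ _ f ⟨hE, hf, -⟩ hFGFS
  have hsupp : (Module.support R R).Finite :=
    hFGFS.finite_support_of_injective.subset (Module.support_subset_of_injective f hf)
  rw [Module.support_of_noZeroSMulDivisors] at hsupp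
  exact Set.infinite_univ hsupp

/-- If `(R, m)` is a `2`-dimensional commutative Noetherian local domain with infinitely many
prime ideals, then `(FG, FS)` satisfies the condition `C_I` for every ideal `I` of `R`, but
`(FG, FS)` is not closed under injective hulls. -/
theorem fgfs_melkersson_not_closed_under_injective_hulls
    (R : Type u) [CommRing R] [IsNoetherianRing R] [IsLocalRing R] [IsDomain R]
    (hdim : ringKrullDim R = 2) (h : Infinite (PrimeSpectrum R)) :
    (∀ (I : Ideal R) (X : Type u) [AddCommGroup X] [Module R X],
      (∀ x : X, ∃ n : ℕ, ∀ a ∈ I ^ n, a • x = 0) →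
      InFGFS R ↥(Submodule.torsionBySet R X (I : Set R)) →
      InFGFS R X) ∧
    ∃ X : ModuleCat.{u} R, InFGFS R X ∧
      ∀ (E : Type u) [AddCommGroup E] [Module R E] (f : X →ₗ[R] E),
        IsInjectiveHull R f → ¬ InFGFS R E :=
  fgfs_melkersson_not_closed_under_injective_hulls_general R
    (fun _ hI => finite_zeroLocus_of_ringKrullDim_le_two hdim.le hI) h
end

section
/- Let (R, m) be a commutative Noetherian local ring and let M be a Serre subcategory of the category of R-modules that contains a nonzero R-module and satisfies condition C_m with respect to the maximal ideal m. Then the injective hull E_R(R/m) of the residue field belongs to M. -/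
universe u

/-- A Serre subcategory of the category of `R`-modules: a class of `R`-modules, closed under
isomorphisms, submodules, quotient modules, and extensions. -/
structure SerreClass (R : Type u) [CommRing R] : Type (u + 1) where
  /-- membership predicate of the class -/
  Mem : ∀ (M : Type u) [AddCommGroup M] [Module R M], Prop
  mem_of_iso : ∀ (M N : Type u) [AddCommGroup M] [Module R M] [AddCommGroup N] [Module R N],
    (M ≃ₗ[R] N) → Mem M → Mem N
  mem_of_submodule : ∀ (M : Type u) [AddCommGroup M] [Module R M] (N : Submodule R M),
    Mem M → Mem N
  mem_of_quotient : ∀ (M : Type u) [AddCommGroup M] [Module R M] (N : Submodule R M),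
    Mem M → Mem (M ⧸ N)
  mem_of_extension : ∀ (M : Type u) [AddCommGroup M] [Module R M] (N : Submodule R M),
    Mem N → Mem (M ⧸ N) → Mem M

/-- A Serre subcategory `S` satisfies the condition `C_I` if whenever `X = Γ_I(X)` (every
element of `X` is annihilated by some power of `I`) and `(0 :_X I) ∈ S`, then `X ∈ S`. -/
def SerreClass.SatisfiesC {R : Type u} [CommRing R] (S : SerreClass R) (I : Ideal R) : Prop :=
  ∀ (X : Type u) [AddCommGroup X] [Module R X],
    (∀ x : X, ∃ n : ℕ, ∀ a ∈ I ^ n, a • x = 0) →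
    S.Mem ↥(Submodule.torsionBySet R X (I : Set R)) → S.Mem X

/-!
Let `x ∈ M ∈ S` with `ann(x) ≤ m`; over a local ring any `x ≠ 0` will do. Then `R/m` is a quotient
of `R/ann(x) ≅ Rx ⊆ M`, so `R/m ∈ S`.
Let `N` be the essential copy of `R/m` in `E`. By Artin–Rees applied to `N ∩ Rx ⊆ Rx` for `x ∈ E`,
`mⁿx ∩ N ⊆ m(N ∩ Rx) = 0` for large `n`, so `mⁿx = 0` since `N` is essential: `E` is `m`-torsion.
Moreover `(0 :_E m)` is a vector space over `R/m`, in which the essential submodule `N` cannot be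
proper. Hence `(0 :_E m) = N ∈ S`, and `C_m` gives `E ∈ S`.
-/

section Essential

variable {R M : Type*} [CommRing R] [AddCommGroup M] [Module R M]

/-- `N` is an essential (large) submodule of `M`: the only submodule meeting it trivially is `⊥`.
This is the condition on the image in `IsInjectiveHull`, in contrapositive form. -/
def IsEssential (N : Submodule R M) : Prop :=
  ∀ P : Submodule R M, Disjoint P N → P = ⊥

namespace IsEssential

variable {N : Submodule R M}

theorem comap_subtype (hN : IsEssential N) (P : Submodule R M) :
    IsEssential (N.comap P.subtype) := by
  intro Q hQ
  have hdisj : Disjoint (Q.map P.subtype) N := by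
    rw [disjoint_iff, Submodule.map_inf_eq_map_inf_comap, hQ.eq_bot, Submodule.map_bot]
  apply Submodule.map_injective_of_injective P.subtype_injective
  rw [hN _ hdisj, Submodule.map_bot]

theorem exists_pow_smul_top_eq_bot [IsNoetherianRing R] [Module.Finite R M]
    (hN : IsEssential N) {I : Ideal R} (hI : I • N = ⊥) :
    ∃ n : ℕ, I ^ n • (⊤ : Submodule R M) = ⊥ := by
  obtain ⟨k, hk⟩ := I.exists_pow_inf_eq_pow_smul N
  refine ⟨k + 1, hN _ (disjoint_iff_inf_le.2 ?_)⟩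
  calc I ^ (k + 1) • ⊤ ⊓ N = I • (I ^ k • ⊤ ⊓ N) := by
        rw [hk (k + 1) k.le_succ, Nat.add_sub_cancel_left, pow_one]
    _ ≤ I • N := smul_mono_right I inf_le_right
    _ = ⊥ := hI

theorem exists_pow_smul_eq_zero [IsNoetherianRing R] (hN : IsEssential N) {I : Ideal R}
    (hI : I • N = ⊥) (x : M) : ∃ n : ℕ, ∀ a ∈ I ^ n, a • x = 0 := by
  let P := Submodule.span R {x}
  have hIP : I • N.comap P.subtype = ⊥ := by
    rw [← le_bot_iff, ← P.ker_subtype, ← Submodule.comap_bot, ← hI]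
    exact Submodule.smul_comap_le_comap_smul _ _ _
  obtain ⟨n, hn⟩ := (hN.comap_subtype P).exists_pow_smul_top_eq_bot hIP
  refine ⟨n, fun a ha ↦ ?_⟩
  have hax : a • (⟨x, Submodule.mem_span_singleton_self x⟩ : P) ∈ I ^ n • (⊤ : Submodule R P) :=
    Submodule.smul_mem_smul ha Submodule.mem_top
  rw [hn, Submodule.mem_bot] at hax
  exact congrArg Subtype.val hax

theorem torsionBySet_eq (hN : IsEssential N) {m : Ideal R} [hm : m.IsMaximal]
    (hmN : m • N = ⊥) : Submodule.torsionBySet R M m = N := by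
  apply le_antisymm
  · intro x hx
    by_contra hxN
    have hdisj : Disjoint (Submodule.span R {x}) N := by
      rw [Submodule.disjoint_def]
      intro y hy hyN
      obtain ⟨r, rfl⟩ := Submodule.mem_span_singleton.1 hy
      by_cases hr : r ∈ m
      · exact (Submodule.mem_torsionBySet_iff _ _).1 hx ⟨r, hr⟩
      · obtain ⟨s, i, hi, hsr⟩ := hm.exists_inv hr
        have hix : i • x = 0 := (Submodule.mem_torsionBySet_iff _ _).1 hx ⟨i, hi⟩
        have hsrx : s • r • x = x := by
          rw [← mul_smul, ← add_zero ((s * r) • x), ← hix, ← add_smul, hsr, one_smul]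
        exact (hxN (hsrx ▸ N.smul_mem s hyN)).elim
    have hx0 : x = 0 := Submodule.span_singleton_eq_bot.1 (hN _ hdisj)
    exact hxN (hx0 ▸ N.zero_mem)
  · intro x hx
    rw [Submodule.mem_torsionBySet_iff]
    rintro ⟨a, ha⟩
    exact (Submodule.mem_bot R).1 (hmN ▸ Submodule.smul_mem_smul ha hx)

end IsEssential

end Essential

namespace SerreClass

variable {R : Type u} [CommRing R] (S : SerreClass R)
  {M N : Type u} [AddCommGroup M] [Module R M] [AddCommGroup N] [Module R N]

theorem mem_of_injective {f : M →ₗ[R] N} (hf : Function.Injective f) (hN : S.Mem N) : S.Mem M :=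
  S.mem_of_iso _ _ (LinearEquiv.ofInjective f hf).symm (S.mem_of_submodule _ _ hN)

theorem mem_of_surjective {f : M →ₗ[R] N} (hf : Function.Surjective f) (hM : S.Mem M) : S.Mem N :=
  S.mem_of_iso _ _ (f.quotKerEquivOfSurjective hf) (S.mem_of_quotient _ _ hM)

theorem mem_quotient_of_mem_support (hM : S.Mem M) {p : PrimeSpectrum R}
    (hp : p ∈ Module.support R M) : S.Mem (R ⧸ p.asIdeal) := by
  obtain ⟨x, hx⟩ := Module.mem_support_iff_exists_annihilator.1 hp
  rw [Submodule.annihilator_span_singleton] at hx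
  let g := LinearMap.toSpanSingleton R M x
  have hker : S.Mem (R ⧸ LinearMap.ker g) :=
    S.mem_of_injective (f := (LinearMap.ker g).liftQ g le_rfl)
      (LinearMap.ker_eq_bot.1 (Submodule.ker_liftQ_eq_bot _ _ _ le_rfl)) hM
  exact S.mem_of_surjective (Submodule.factor_surjective hx) hker

variable {S}

theorem SatisfiesC.mem_of_isEssential [IsNoetherianRing R] {m : Ideal R} [m.IsMaximal]
    (hC : S.SatisfiesC m) {P : Submodule R M} (hess : IsEssential P) (hmP : m • P = ⊥)
    (hP : S.Mem P) : S.Mem M := by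
  refine hC M (hess.exists_pow_smul_eq_zero hmP) ?_
  rwa [hess.torsionBySet_eq hmP]

end SerreClass

theorem injective_hull_residue_field_mem_general
    {R : Type u} [CommRing R] [IsNoetherianRing R] {S : SerreClass R} {p : PrimeSpectrum R}
    [p.asIdeal.IsMaximal] {M : Type u} [AddCommGroup M] [Module R M] (hM : S.Mem M)
    (hp : p ∈ Module.support R M) (hC : S.SatisfiesC p.asIdeal)
    {E : Type u} [AddCommGroup E] [Module R E] (f : (R ⧸ p.asIdeal) →ₗ[R] E)
    (hess : IsEssential (LinearMap.range f)) : S.Mem E := by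
  have hrange : S.Mem (LinearMap.range f) :=
    S.mem_of_surjective f.surjective_rangeRestrict (S.mem_quotient_of_mem_support hM hp)
  have hsmul : p.asIdeal • LinearMap.range f = ⊥ := by
    rw [← Submodule.le_annihilator_iff]
    exact Ideal.annihilator_quotient.ge.trans
      (f.rangeRestrict.annihilator_le_of_surjective f.surjective_rangeRestrict)
  exact hC.mem_of_isEssential hess hsmul hrange

/-- Let `(R, m)` be a commutative Noetherian local ring and `S` a Serre subcategory containing
a nonzero module and satisfying the condition `C_m`.  Then the injective hull `E_R(R/m)` of
the residue field belongs to `S`. -/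
theorem injective_hull_residue_field_mem
    (R : Type u) [CommRing R] [IsNoetherianRing R] [IsLocalRing R] (S : SerreClass R)
    (hne : ∃ M : ModuleCat.{u} R, Nontrivial M ∧ S.Mem M)
    (hC : S.SatisfiesC (IsLocalRing.maximalIdeal R)) :
    ∀ (E : Type u) [AddCommGroup E] [Module R E]
      (f : (R ⧸ IsLocalRing.maximalIdeal R) →ₗ[R] E),
      IsInjectiveHull R f → S.Mem E := by
  rintro E _ _ f ⟨-, -, hess⟩
  obtain ⟨M, _, hM⟩ := hne
  have : (IsLocalRing.closedPoint R).asIdeal.IsMaximal := IsLocalRing.maximalIdeal.isMaximal R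
  exact injective_hull_residue_field_mem_general hM (IsLocalRing.closedPoint_mem_support R M) hC f
    fun P hP ↦ by_contra fun hP0 ↦ hess P hP0 hP.eq_bot
end
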